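/- Let A be the shift operator on L²(ℝ), n ∈ ℕ, κ_{n,0}, …, κ_{n,n} ∈ ℝ, g_n := Σ_{k=0}^n k!·κ_{n,k}·1_{[-k,-k+1]}, β ∈ ℝ, Ā_n z := A z − β⟨g_n,z⟩1_{[0,1]}, and let γ(i,k) be defined by γ(0,0)=1, γ(i,k)=γ(i−1,k−1) for 1 ≤ i ≤ k, and γ(0,k)=Σ_{j=0}^{(k−1)∧n}(−β)·j!·κ_{n,j}·γ(j,k−1). Then for all α, a₁, a₂ > 0, T > 0, M ∈ ℕ and t ∈ [0,T], the truncated control satisfies the explicit polynomial formula (α a₂/(2a₁))·⟨g_n, Σ_{k=0}^M ((T−t)^k/k!)·Ā_n^k 1_{[0,1]}⟩ = (α a₂/(2a₁))·Σ_{k=0}^M ( Σ_{i=0}^{k∧n} i!·κ_{n,i}·γ(i,k)/k! )·(T−t)^k. -/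

import Mathlib

open MeasureTheory

/-- The indicator function of the interval `[a, b]`, regarded as an element of `L²(ℝ)`. -/
noncomputable def ind (a b : ℝ) : Lp ℝ 2 (volume : Measure ℝ) :=
  indicatorConstLp 2 (measurableSet_Icc : MeasurableSet (Set.Icc a b))
    (by rw [Real.volume_Icc]; exact ENNReal.ofReal_ne_top) (1 : ℝ)

/-- The coefficients `γ(i,k)`: `γ(0,0) = 1` and, for `k ≥ 1`, `γ(i,k) = γ(i−1,k−1)` for
`i = 1, …, k` and `γ(0,k) = ∑_{j=0}^{(k−1)∧n} (−β) j! κ_{n,j} γ(j,k−1)`. -/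
noncomputable def gam (β : ℝ) (n : ℕ) (κ : ℕ → ℝ) : ℕ → ℕ → ℝ
  | i, 0 => if i = 0 then 1 else 0
  | 0, k + 1 => ∑ j ∈ Finset.range (min k n + 1),
      (-β) * (j.factorial : ℝ) * κ j * gam β n κ j k
  | i + 1, k + 1 => gam β n κ i k

/-!
For an orthonormal sequence `e` with `A (e i) = e (i + 1)`, the operator `Ā` sends a combination of
`e 0, …, e k` to one of `e 0, …, e (k + 1)`: `A` moves every coefficient up by one index and the
rank-one feedback term supplies the new coefficient of `e 0`. This is exactly the recursion of
`γ(·, k)`, so `γ(·, k)` are the coordinates of `Ā ^ k (e 0)`, and pairing with `g` keeps the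
indices `i ≤ k ∧ n`.
-/

section ShiftFeedback

open scoped ComplexConjugate

lemma inner_sum_sum_of_orthonormal {𝕜 E ι : Type*} [RCLike 𝕜] [SeminormedAddCommGroup E]
    [InnerProductSpace 𝕜 E] [DecidableEq ι] {e : ι → E} (he : Orthonormal 𝕜 e)
    (s t : Finset ι) (a b : ι → 𝕜) :
    inner 𝕜 (∑ i ∈ s, a i • e i) (∑ j ∈ t, b j • e j) = ∑ i ∈ s ∩ t, conj (a i) * b i := by
  simp only [sum_inner, inner_sum, inner_smul_left, inner_smul_right, orthonormal_iff_ite.mp he,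
    mul_ite, mul_one, mul_zero, Finset.sum_ite_eq', Finset.sum_ite_mem, mul_comm (b _), ite_mul,
    zero_mul, Finset.inter_comm t s]

variable {E : Type*} [SeminormedAddCommGroup E] [InnerProductSpace ℝ E] {e : ℕ → E}

lemma inner_sum_range_sum_range_of_orthonormal (he : Orthonormal ℝ e) (n k : ℕ) (a b : ℕ → ℝ) :
    inner ℝ (∑ i ∈ Finset.range (n + 1), a i • e i) (∑ i ∈ Finset.range (k + 1), b i • e i) =
      ∑ i ∈ Finset.range (min k n + 1), a i * b i := by
  have range_inter : Finset.range (n + 1) ∩ Finset.range (k + 1) = Finset.range (min k n + 1) := by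
    ext i
    simp only [Finset.mem_inter, Finset.mem_range]
    lia
  simp only [inner_sum_sum_of_orthonormal he, range_inter, conj_trivial]

variable {A : E →ₗ[ℝ] E} {n : ℕ} {κ : ℕ → ℝ} {β : ℝ} {g : E} {Abar : E → E}

lemma iterate_shift_feedback_eq_sum_gam (he : Orthonormal ℝ e) (hA : ∀ i, A (e i) = e (i + 1))
    (hg : g = ∑ i ∈ Finset.range (n + 1), ((i.factorial : ℝ) * κ i) • e i)
    (hAbar : ∀ z, Abar z = A z - (β * inner ℝ g z) • e 0) (k : ℕ) :
    Abar^[k] (e 0) = ∑ i ∈ Finset.range (k + 1), gam β n κ i k • e i := by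
  induction k with
  | zero => simp [gam]
  | succ k ih =>
    have shifted : A (∑ i ∈ Finset.range (k + 1), gam β n κ i k • e i) =
        ∑ i ∈ Finset.range (k + 1), gam β n κ (i + 1) (k + 1) • e (i + 1) := by
      simp only [map_sum, map_smul, hA, gam]
    have feedback : -(β * inner ℝ g (∑ i ∈ Finset.range (k + 1), gam β n κ i k • e i)) =
        gam β n κ 0 (k + 1) := by
      rw [hg, inner_sum_range_sum_range_of_orthonormal he, gam, ← neg_mul, Finset.mul_sum]
      simp only [mul_assoc]
    rw [Function.iterate_succ_apply', ih, hAbar, shifted, sub_eq_add_neg, ← neg_smul, feedback,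
      ← Finset.sum_range_succ' fun i ↦ gam β n κ i (k + 1) • e i]

theorem truncated_control_polynomial_formula_general (he : Orthonormal ℝ e)
    (hA : ∀ i, A (e i) = e (i + 1))
    (hg : g = ∑ i ∈ Finset.range (n + 1), ((i.factorial : ℝ) * κ i) • e i)
    (hAbar : ∀ z, Abar z = A z - (β * inner ℝ g z) • e 0) (M : ℕ) (s : ℝ) :
    inner ℝ g (∑ k ∈ Finset.range (M + 1), (s ^ k / (k.factorial : ℝ)) • Abar^[k] (e 0)) =
      ∑ k ∈ Finset.range (M + 1),
        (∑ i ∈ Finset.range (min k n + 1),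
          (i.factorial : ℝ) * κ i * gam β n κ i k / (k.factorial : ℝ)) * s ^ k := by
  have inner_iterate (k : ℕ) : inner ℝ g (Abar^[k] (e 0)) =
      ∑ i ∈ Finset.range (min k n + 1), (i.factorial : ℝ) * κ i * gam β n κ i k := by
    rw [iterate_shift_feedback_eq_sum_gam he hA hg hAbar, hg,
      inner_sum_range_sum_range_of_orthonormal he]
  simp only [inner_sum, real_inner_smul_right, inner_iterate, ← Finset.sum_div]
  exact Finset.sum_congr rfl fun k _ ↦ by ring

end ShiftFeedback

lemma inner_ind_ind (a b c d : ℝ) :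
    inner ℝ (ind a b) (ind c d) = max (min b d - max a c) 0 := by
  have volume_Icc_ne_top (x y : ℝ) : volume (Set.Icc x y) ≠ ⊤ := measure_Icc_lt_top.ne
  rw [ind, ind, L2.real_inner_indicatorConstLp_one_indicatorConstLp_one _ _ (volume_Icc_ne_top a b)
    (volume_Icc_ne_top c d), Set.Icc_inter_Icc, measureReal_def, Real.volume_Icc,
    ENNReal.toReal_ofReal']

lemma orthonormal_ind_intCast : Orthonormal ℝ fun m : ℤ ↦ ind (m : ℝ) (m + 1) := by
  refine orthonormal_iff_ite.mpr fun m l ↦ ?_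
  rw [inner_ind_ind, min_add_add_right]
  split_ifs with h
  · simp [h]
  · have one_le_max_sub_min : (1 : ℝ) ≤ max (m : ℝ) l - min (m : ℝ) l := by
      rw [max_sub_min_eq_abs]
      exact_mod_cast Int.one_le_abs (sub_ne_zero.mpr (Ne.symm h))
    exact max_eq_right (by linarith)

lemma orthonormal_ind_neg_natCast : Orthonormal ℝ fun k : ℕ ↦ ind (-(k : ℝ)) (-(k : ℝ) + 1) := by
  simpa [Function.comp_def] using
    orthonormal_ind_intCast.comp (fun k : ℕ ↦ -(k : ℤ)) (neg_injective.comp Nat.cast_injective)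

lemma eq_ind_sub_of_ae_eq_ind_comp_add {f : Lp ℝ 2 (volume : Measure ℝ)} {a b c : ℝ}
    (hf : f =ᵐ[volume] fun x ↦ ind a b (x + c)) : f = ind (a - c) (b - c) := by
  have translation := measurePreserving_add_right (volume : Measure ℝ) c
  calc f = Lp.compMeasurePreserving (· + c) translation (ind a b) :=
        Lp.ext (hf.trans (Lp.coeFn_compMeasurePreserving _ translation).symm)
    _ = ind (a - c) (b - c) := by
        simp only [ind, Lp.indicatorConstLp_compMeasurePreserving, Set.preimage_add_const_Icc]

lemma unit_translation_ind_neg_natCast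
    {A : Lp ℝ 2 (volume : Measure ℝ) → Lp ℝ 2 (volume : Measure ℝ)}
    (hA : ∀ f, A f =ᵐ[volume] fun x ↦ f (x + 1)) (k : ℕ) :
    A (ind (-(k : ℝ)) (-(k : ℝ) + 1)) =
      ind (-((k + 1 : ℕ) : ℝ)) (-((k + 1 : ℕ) : ℝ) + 1) := by
  convert eq_ind_sub_of_ae_eq_ind_comp_add (hA _) using 2 <;> push_cast <;> ring

/-- With `A` the shift operator on `L²(ℝ)`, `g_n = ∑_{k=0}^n k! κ_{n,k} 1_{[-k,-k+1]}`,
`Ā_n z = A z − β ⟨g_n, z⟩ 1_{[0,1]}` and `γ(i,k)` as above, the truncated control satisfies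
`(α a₂/(2a₁)) ⟨g_n, ∑_{k=0}^M ((T−t)^k/k!) Ā_n^k 1_{[0,1]}⟩
  = (α a₂/(2a₁)) ∑_{k=0}^M ( ∑_{i=0}^{k∧n} i! κ_{n,i} γ(i,k)/k! ) (T−t)^k`. -/
theorem truncated_control_polynomial_formula
    (A : Lp ℝ 2 (volume : Measure ℝ) →L[ℝ] Lp ℝ 2 (volume : Measure ℝ))
    (hA : ∀ f : Lp ℝ 2 (volume : Measure ℝ), (A f : ℝ → ℝ) =ᵐ[volume] fun x => f (x + 1))
    (n : ℕ) (κ : ℕ → ℝ) (β : ℝ)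
    (gn : Lp ℝ 2 (volume : Measure ℝ))
    (hgn : gn = ∑ k ∈ Finset.range (n + 1),
      ((k.factorial : ℝ) * κ k) • ind (-(k : ℝ)) (-(k : ℝ) + 1))
    (Abar : Lp ℝ 2 (volume : Measure ℝ) →L[ℝ] Lp ℝ 2 (volume : Measure ℝ))
    (hAbar : ∀ z, Abar z = A z - (β * (inner ℝ gn z : ℝ)) • ind 0 1)
    (α a₁ a₂ T : ℝ) (hα : 0 < α) (ha₁ : 0 < a₁) (ha₂ : 0 < a₂) (hT : 0 < T)
    (M : ℕ) (t : ℝ) (ht : t ∈ Set.Icc (0 : ℝ) T) :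
    (α * a₂ / (2 * a₁)) *
        (inner ℝ gn (∑ k ∈ Finset.range (M + 1),
          ((T - t) ^ k / (k.factorial : ℝ)) • ((Abar ^ k) (ind 0 1))) : ℝ) =
      (α * a₂ / (2 * a₁)) * ∑ k ∈ Finset.range (M + 1),
        (∑ i ∈ Finset.range (min k n + 1),
          (i.factorial : ℝ) * κ i * gam β n κ i k / (k.factorial : ℝ)) * (T - t) ^ k := by
  simpa only [FunLike.coe_pow_eq_iterate, Nat.cast_zero, neg_zero, zero_add] using
    congrArg (α * a₂ / (2 * a₁) * ·)
      (truncated_control_polynomial_formula_general (A := A.toLinearMap)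
        orthonormal_ind_neg_natCast (unit_translation_ind_neg_natCast hA) hgn
        (by simpa using hAbar) M (T - t))
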